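/- Let P be a reflexive lattice polytope of dimension d, i.e. there is a lattice point p in the interior of cone(P) at height 1 with cone°(P) ∩ ℤ^{d+1} = p + (cone(P) ∩ ℤ^{d+1}). Then the h*-polynomial of P is palindromic: h*_k = h*_{d-k} for all 0 ≤ k ≤ d. -/

import Mathlib

open scoped Pointwise

/-- The cone over a polytope `P ⊂ ℝ^d`, placed at height 1 in `ℝ^d × ℝ`. -/
def polyCone {d : ℕ} (P : Set (Fin d → ℝ)) : Set ((Fin d → ℝ) × ℝ) :=
  {x | ∃ r : ℝ, 0 ≤ r ∧ ∃ p ∈ P, x = (r • p, r)}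

/-- Cast a lattice point of `ℤ^d × ℤ` into `ℝ^d × ℝ`. -/
def latticeCastPair {d : ℕ} (z : (Fin d → ℤ) × ℤ) : (Fin d → ℝ) × ℝ :=
  ((fun j => (z.1 j : ℝ)), (z.2 : ℝ))

/-!
Stanley reciprocity for the cone over `P` reads: for the lattice points of the open and of the
closed cone, counted by height, the coefficients of `(1 - X) ^ (d + 1)` times the two generating
functions agree in complementary degrees `i + j = d + 1`. If the open cone is the closed one
translated to height `1`, the first product is `X` times the second, which is palindromy of `h*`.

For reciprocity, triangulate the cone by the lower faces of a generic lift of its generators and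
choose a generic interior point `q`. Deciding boundary points by moving them slightly in the
direction `q`, each simplicial cone becomes half-open and together they partition the closed cone;
moving in the direction `-q` they partition the open cone instead. Multiplying the series of a
half-open simplicial cone by `1 - X` once for each generator leaves the series of its half-open
fundamental parallelepiped, and the reflection of the parallelepiped in its centre exchanges the
versions for `q` and `-q`.
-/

namespace Ehrhart

open Filter Function Set Submodule Topology
open scoped PowerSeries

section HalfOpenRay

/-- The numbers `x` such that `x + ε * q` is nonnegative for all small `ε > 0`: the nonnegative
half-line, with its endpoint removed when `q < 0`. -/
def halfOpenRay (q : ℝ) : Set ℝ := if q < 0 then Ioi 0 else Ici 0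

variable {q x : ℝ}

lemma halfOpenRay_subset_Ici : halfOpenRay q ⊆ Ici 0 := by
  unfold halfOpenRay
  split_ifs
  exacts [Ioi_subset_Ici_self, Subset.rfl]

lemma mem_halfOpenRay_of_pos (hx : 0 < x) : x ∈ halfOpenRay q := by
  unfold halfOpenRay
  split_ifs
  exacts [hx, hx.le]

lemma zero_mem_halfOpenRay_iff : 0 ∈ halfOpenRay q ↔ 0 ≤ q := by
  unfold halfOpenRay
  split_ifs with hq
  · simp [hq.not_ge]
  · simp [not_lt.1 hq]

lemma neg_mem_halfOpenRay_iff (hq : q ≠ 0) : -x ∈ halfOpenRay q ↔ x ∉ halfOpenRay (-q) := by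
  unfold halfOpenRay
  rcases hq.lt_or_gt with hq | hq <;> simp [hq, hq.not_gt]

lemma mem_halfOpenRay_of_sub_one_mem (hx : x - 1 ∈ halfOpenRay q) : x ∈ halfOpenRay q := by
  have : 0 ≤ x - 1 := halfOpenRay_subset_Ici hx
  exact mem_halfOpenRay_of_pos (by linarith)

lemma tendsto_add_smul_nhdsGT_zero {E : Type*} [AddCommGroup E] [Module ℝ E] [TopologicalSpace E]
    [ContinuousAdd E] [ContinuousSMul ℝ E] (x q : E) :
    Tendsto (fun ε : ℝ => x + ε • q) (𝓝[>] 0) (𝓝 x) := by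
  have h : Continuous fun ε : ℝ => x + ε • q := by fun_prop
  simpa using (h.tendsto 0).mono_left nhdsWithin_le_nhds

lemma eventually_nonneg_add_mul_iff (x q : ℝ) :
    ∀ᶠ ε in 𝓝[>] 0, 0 ≤ x + ε * q ↔ x ∈ halfOpenRay q := by
  have hlim := tendsto_add_smul_nhdsGT_zero x q
  rcases lt_trichotomy x 0 with hx | rfl | hx
  · filter_upwards [hlim.eventually (gt_mem_nhds hx)] with ε hε
    exact iff_of_false hε.not_ge fun h => hx.not_ge (halfOpenRay_subset_Ici h)
  · filter_upwards [self_mem_nhdsWithin] with ε hε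
    rw [zero_add, mul_nonneg_iff_of_pos_left hε, zero_mem_halfOpenRay_iff]
  · filter_upwards [hlim.eventually (lt_mem_nhds hx)] with ε hε
    exact iff_of_true (le_of_lt hε) (mem_halfOpenRay_of_pos hx)

end HalfOpenRay

section BasisSubset

variable {E ι : Type*} [AddCommGroup E] [Module ℝ E] {a : ι → E}

/-- The index sets of the bases of `E` contained in the family `a`; these are the maximal simplices
available to triangulate the cone spanned by `a`. -/
abbrev BasisSubset (a : ι → E) : Type _ :=
  {B : Finset ι // LinearIndepOn ℝ a B ∧ span ℝ (a '' B) = ⊤}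

namespace BasisSubset

/-- The basis of `E` indexed by `B`. -/
noncomputable def basis (B : BasisSubset a) : Module.Basis B.1 ℝ E :=
  .mk B.2.1 (image_eq_range a _ ▸ B.2.2).ge

lemma basis_apply (B : BasisSubset a) (i : B.1) : B.basis i = a i :=
  Module.Basis.mk_apply _ _ i

/-- The coordinates in the basis indexed by `B`, extended by zero to all of `ι`. -/
noncomputable def coords (B : BasisSubset a) : E →ₗ[ℝ] ι → ℝ :=
  ExtendByZero.linearMap ℝ Subtype.val ∘ₗ B.basis.equivFun.toLinearMap

lemma coords_of_mem (B : BasisSubset a) (x : E) {i : ι} (hi : i ∈ B.1) :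
    B.coords x i = B.basis.repr x ⟨i, hi⟩ :=
  Subtype.val_injective.extend_apply (B.basis.equivFun x) 0 ⟨i, hi⟩

lemma coords_of_notMem (B : BasisSubset a) (x : E) {i : ι} (hi : i ∉ B.1) : B.coords x i = 0 :=
  extend_apply' _ _ _ (by simpa using hi)

lemma coords_self [DecidableEq ι] (B : BasisSubset a) {i : ι} (hi : i ∈ B.1) :
    B.coords (a i) = Pi.single i 1 := by
  ext j
  by_cases hj : j ∈ B.1
  · rw [coords_of_mem B _ hj, ← B.basis_apply ⟨i, hi⟩, B.basis.repr_self_apply, Pi.single_apply]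
    simp only [Subtype.mk.injEq, eq_comm]
  · rw [coords_of_notMem B _ hj, Pi.single_eq_of_ne (ne_of_mem_of_not_mem hi hj).symm]

lemma card_eq_finrank (B : BasisSubset a) : B.1.card = Module.finrank ℝ E := by
  rw [Module.finrank_eq_card_basis B.basis, Fintype.card_coe]

variable [Fintype ι]

lemma sum_coords_smul (B : BasisSubset a) (x : E) : ∑ i, B.coords x i • a i = x := by
  classical
  rw [← Finset.sum_subset B.1.subset_univ fun i _ hi => by rw [coords_of_notMem B x hi, zero_smul],
    ← Finset.sum_coe_sort]
  conv_rhs => rw [← B.basis.sum_repr x]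
  refine Finset.sum_congr rfl fun i _ => ?_
  rw [coords_of_mem B x i.2, basis_apply]

lemma coords_sum_smul_of_support (B : BasisSubset a) {l : ι → ℝ} (hl : ∀ i ∉ B.1, l i = 0) :
    B.coords (∑ i, l i • a i) = l := by
  classical
  ext j
  simp only [map_sum, map_smul, Finset.sum_apply, Pi.smul_apply, smul_eq_mul]
  rw [Finset.sum_eq_single j]
  · by_cases hj : j ∈ B.1
    · simp [coords_self B hj]
    · simp [hl j hj]
  · intro i _ hij
    by_cases hi : i ∈ B.1
    · simp [coords_self B hi, hij.symm]
    · simp [hl i hi]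
  · simp

end BasisSubset

end BasisSubset

section Cone

variable {E ι : Type*} [AddCommGroup E] [Module ℝ E]

lemma mem_hull_range_iff [Fintype ι] {a : ι → E} {x : E} :
    x ∈ PointedCone.hull ℝ (range a) ↔ ∃ l : ι → ℝ, 0 ≤ l ∧ ∑ i, l i • a i = x := by
  rw [mem_span_range_iff_exists_fun]
  constructor
  · rintro ⟨c, hc⟩
    exact ⟨fun i => c i, fun i => (c i).2, hc⟩
  · rintro ⟨l, hl, hlx⟩
    exact ⟨fun i => ⟨l i, hl i⟩, hlx⟩

variable [TopologicalSpace E] [IsTopologicalAddGroup E] [ContinuousConstSMul ℝ E]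

lemma add_smul_mem_interior {C : PointedCone ℝ E} {x q : E} (hx : x ∈ C)
    (hq : q ∈ interior (C : Set E)) {ε : ℝ} (hε : 0 < ε) : x + ε • q ∈ interior (C : Set E) := by
  have h_smul : ε • (C : Set E) ⊆ C := by
    rintro _ ⟨y, hy, rfl⟩
    exact C.smul_mem hε.le hy
  have h_add : (C : Set E) + C ⊆ C := by
    rintro _ ⟨y, hy, z, hz, rfl⟩
    exact C.add_mem hy hz
  have hεq : ε • q ∈ interior (C : Set E) :=
    interior_mono h_smul (interior_smul₀ hε.ne' (C : Set E) ▸ smul_mem_smul_set hq)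
  exact interior_mono h_add (subset_interior_add_right (add_mem_add hx hεq))

end Cone

section Generic

/-- A point is generic with respect to the family `a` if it lies on no proper subspace spanned by
members of `a`. -/
def IsGeneric {E ι : Type*} [AddCommGroup E] [Module ℝ E] (a : ι → E) (y : E) : Prop :=
  ∀ S : Set ι, span ℝ (a '' S) ≠ ⊤ → y ∉ span ℝ (a '' S)

section Algebraic

variable {E ι : Type*} [AddCommGroup E] [Module ℝ E] {a : ι → E} {y q : E}

lemma IsGeneric.neg (hy : IsGeneric a y) : IsGeneric a (-y) :=
  fun S hS => by simpa using hy S hS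

lemma IsGeneric.coords_ne_zero [Finite ι] (hy : IsGeneric a y) (B : BasisSubset a) {i : ι}
    (hi : i ∈ B.1) : B.coords y i ≠ 0 := by
  cases nonempty_fintype ι
  intro h_zero
  refine hy (B.1 \ {i}) (fun h_top => ?_) ?_
  · exact linearIndepOn_iff_notMem_span.1 B.2.1 i hi (by rw [h_top]; exact mem_top)
  · rw [← B.sum_coords_smul y]
    refine sum_mem fun j _ => ?_
    by_cases hj : j ∈ (B.1 : Set ι) \ {i}
    · exact smul_mem _ _ (subset_span (mem_image_of_mem a hj))
    · have : B.coords y j = 0 := by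
        by_cases hji : j = i
        · rw [hji, h_zero]
        · exact B.coords_of_notMem y fun hjB => hj ⟨hjB, hji⟩
      simp [this]

lemma eventually_add_smul_notMem (H : Submodule ℝ E) (x : E) (hq : q ∉ H) :
    ∀ᶠ ε : ℝ in 𝓝[>] 0, x + ε • q ∉ H := by
  have h_subsingleton : {ε : ℝ | x + ε • q ∈ H}.Subsingleton := by
    intro ε hε δ hδ
    by_contra hne
    have : (ε - δ) • q ∈ H := by
      convert H.sub_mem hε hδ using 1
      module
    exact hq ((H.smul_mem_iff (sub_ne_zero.2 hne)).1 this)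
  exact (nhdsGT_le_nhdsNE 0).trans (nhdsNE_le_cofinite 0)
    h_subsingleton.finite.compl_mem_cofinite

lemma IsGeneric.eventually_add_smul [Finite ι] (hq : IsGeneric a q) (x : E) :
    ∀ᶠ ε : ℝ in 𝓝[>] 0, IsGeneric a (x + ε • q) := by
  unfold IsGeneric
  rw [eventually_all]
  intro S
  by_cases hS : span ℝ (a '' S) = ⊤
  · simp [hS]
  · filter_upwards [eventually_add_smul_notMem _ x (hq S hS)] with ε hε _ using hε

end Algebraic

variable {E ι : Type*} [NormedAddCommGroup E] [NormedSpace ℝ E] [FiniteDimensional ℝ E]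

lemma exists_mem_forall_notMem_submodule {κ : Type*} [Countable κ] {H : κ → Submodule ℝ E}
    (hH : ∀ k, H k ≠ ⊤) {U : Set E} (hU : IsOpen U) (hne : U.Nonempty) :
    ∃ x ∈ U, ∀ k, x ∉ H k := by
  have h_dense : Dense (⋂ k, (H k : Set E)ᶜ) := by
    refine dense_iInter_of_isOpen (fun k => (H k).closed_of_finiteDimensional.isOpen_compl)
      fun k => interior_eq_empty_iff_dense_compl.1 ?_
    exact not_nonempty_iff_eq_empty.1 fun h => hH k ((H k).eq_top_of_nonempty_interior' h)
  obtain ⟨x, hxU, hx⟩ := h_dense.inter_open_nonempty U hU hne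
  exact ⟨x, hxU, mem_iInter.1 hx⟩

lemma exists_mem_isGeneric [Finite ι] (a : ι → E) {U : Set E} (hU : IsOpen U)
    (hne : U.Nonempty) : ∃ y ∈ U, IsGeneric a y := by
  obtain ⟨y, hyU, hy⟩ := exists_mem_forall_notMem_submodule
    (H := fun S : {S : Set ι // span ℝ (a '' S) ≠ ⊤} => span ℝ (a '' S.1)) (fun S => S.2) hU hne
  exact ⟨y, hyU, fun S hS => hy ⟨S, hS⟩⟩

end Generic

section Triangulation

variable {E ι : Type*}

section Algebraic

variable [AddCommGroup E] [Module ℝ E] {a : ι → E} {y : E}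

lemma exists_basisSubset_subset [Finite ι] {S : Set ι} (hS : span ℝ (a '' S) = ⊤) :
    ∃ B : BasisSubset a, (B.1 : Set ι) ⊆ S := by
  obtain ⟨b, hbS, -, h_span, hb⟩ :=
    exists_linearIndepOn_extension (linearIndepOn_empty ℝ a) (empty_subset S)
  have h_coe : ((toFinite b).toFinset : Set ι) = b := (toFinite b).coe_toFinset
  refine ⟨⟨(toFinite b).toFinset, by rwa [h_coe], ?_⟩, by rwa [h_coe]⟩
  rw [h_coe, eq_top_iff, ← hS]
  exact span_le.2 h_span

/-- The simplicial cone spanned by the basis indexed by `B`. -/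
def simplicialCone (B : BasisSubset a) : Set E := {x | 0 ≤ B.coords x}

lemma simplicialCone_subset_hull [Finite ι] (B : BasisSubset a) :
    simplicialCone B ⊆ PointedCone.hull ℝ (range a) := by
  cases nonempty_fintype ι
  exact fun x hx => mem_hull_range_iff.2 ⟨B.coords x, hx, B.sum_coords_smul x⟩

variable [Fintype ι]

/-- The vectors of coefficients that express `y` as a conic combination of the family `a`. -/
def conicRepr (a : ι → E) (y : E) : Set (ι → ℝ) := {l | 0 ≤ l ∧ ∑ i, l i • a i = y}

lemma coords_mem_conicRepr {B : BasisSubset a} (hy : y ∈ simplicialCone B) :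
    B.coords y ∈ conicRepr a y :=
  ⟨hy, B.sum_coords_smul y⟩

/-- Lift each vector `a i` to `(a i, w i)`. The weight `w` is generic if the hyperplane spanned by
a lifted basis contains no further lifted vector. -/
def IsGenericWeight (a : ι → E) (w : ι → ℝ) : Prop :=
  ∀ B : BasisSubset a, ∀ i ∉ B.1, B.coords (a i) ⬝ᵥ w ≠ w i

/-- The basis `B` is a lower face of the lifted family `(a i, w i)`: every lifted vector lies on or
above the hyperplane spanned by the lifted basis. -/
def IsLower (w : ι → ℝ) (B : BasisSubset a) : Prop := ∀ i, B.coords (a i) ⬝ᵥ w ≤ w i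

variable {w l m : ι → ℝ} {B B' : BasisSubset a}

lemma dotProduct_sub_coords_dotProduct (B : BasisSubset a) (hl : l ∈ conicRepr a y) :
    l ⬝ᵥ w - B.coords y ⬝ᵥ w = ∑ i, l i * (w i - B.coords (a i) ⬝ᵥ w) := by
  simp only [← hl.2, map_sum, map_smul, sum_dotProduct, smul_dotProduct, smul_eq_mul, mul_sub,
    Finset.sum_sub_distrib]
  rfl

lemma IsLower.coords_dotProduct_le (hB : IsLower w B) (hl : l ∈ conicRepr a y) :
    B.coords y ⬝ᵥ w ≤ l ⬝ᵥ w := by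
  rw [← sub_nonneg, dotProduct_sub_coords_dotProduct B hl]
  exact Finset.sum_nonneg fun i _ => mul_nonneg (hl.1 i) (sub_nonneg.2 (hB i))

lemma IsLower.mem_of_dotProduct_eq (hB : IsLower w B) (hw : IsGenericWeight a w)
    (hl : l ∈ conicRepr a y) (h_eq : l ⬝ᵥ w = B.coords y ⬝ᵥ w) {i : ι} (hi : l i ≠ 0) :
    i ∈ B.1 := by
  by_contra hiB
  have h_sum : ∑ i, l i * (w i - B.coords (a i) ⬝ᵥ w) = 0 := by
    rw [← dotProduct_sub_coords_dotProduct B hl, h_eq, sub_self]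
  rw [Finset.sum_eq_zero_iff_of_nonneg fun i _ => mul_nonneg (hl.1 i) (sub_nonneg.2 (hB i))]
    at h_sum
  have h_gap := (mul_eq_zero.1 (h_sum i (Finset.mem_univ i))).resolve_left hi
  exact hw B i hiB (sub_eq_zero.1 h_gap).symm

lemma IsLower.eq_of_mem_simplicialCone (hw : IsGenericWeight a w) (hy : IsGeneric a y)
    (hB : IsLower w B) (hB' : IsLower w B') (hyB : y ∈ simplicialCone B)
    (hyB' : y ∈ simplicialCone B') : B = B' := by
  have hl := coords_mem_conicRepr hyB
  have hl' := coords_mem_conicRepr hyB'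
  have h_eq : B.coords y ⬝ᵥ w = B'.coords y ⬝ᵥ w :=
    le_antisymm (hB.coords_dotProduct_le hl') (hB'.coords_dotProduct_le hl)
  refine Subtype.ext (Finset.Subset.antisymm (fun i hi => ?_) fun i hi => ?_)
  · exact hB'.mem_of_dotProduct_eq hw hl h_eq (hy.coords_ne_zero B hi)
  · exact hB.mem_of_dotProduct_eq hw hl' h_eq.symm (hy.coords_ne_zero B' hi)

lemma dotProduct_nonneg_of_isMinOn (hl : l ∈ conicRepr a y)
    (hmin : IsMinOn (· ⬝ᵥ w) (conicRepr a y) l) (hm : ∑ i, m i • a i = 0)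
    (hlm : ∀ i, l i ∈ halfOpenRay (m i)) : 0 ≤ m ⬝ᵥ w := by
  have h_nonneg : ∀ᶠ ε : ℝ in 𝓝[>] 0, ∀ i, 0 ≤ l i + ε * m i :=
    eventually_all.2 fun i =>
      (eventually_nonneg_add_mul_iff (l i) (m i)).mono fun _ h => h.2 (hlm i)
  obtain ⟨ε, hε, hε_pos⟩ := (h_nonneg.and self_mem_nhdsWithin).exists
  have h_mem : l + ε • m ∈ conicRepr a y := by
    refine ⟨hε, ?_⟩
    simp only [Pi.add_apply, Pi.smul_apply, smul_eq_mul, add_smul, mul_smul,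
      Finset.sum_add_distrib, ← Finset.smul_sum, hm, hl.2, smul_zero, add_zero]
  have h_le : l ⬝ᵥ w ≤ (l + ε • m) ⬝ᵥ w := hmin h_mem
  rw [add_dotProduct, smul_dotProduct, le_add_iff_nonneg_right] at h_le
  exact (mul_nonneg_iff_of_pos_left hε_pos).1 h_le

lemma isLower_of_isMinOn (hl : l ∈ conicRepr a y) (hmin : IsMinOn (· ⬝ᵥ w) (conicRepr a y) l)
    (hB : ∀ i ∈ B.1, l i ≠ 0) : IsLower w B := by
  classical
  intro i
  rw [← sub_nonneg, ← single_one_dotProduct i w, ← sub_dotProduct]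
  refine dotProduct_nonneg_of_isMinOn hl hmin ?_ fun j => ?_
  · simp [sub_smul, B.sum_coords_smul, Pi.single_apply, ite_smul]
  · by_cases hj : j ∈ B.1
    · exact mem_halfOpenRay_of_pos ((hl.1 j).lt_of_ne' (hB j hj))
    · rcases (hl.1 j).eq_or_lt' with h_zero | hpos
      · rw [show l j = 0 from h_zero, zero_mem_halfOpenRay_iff, Pi.sub_apply,
          B.coords_of_notMem _ hj, sub_zero]
        exact (Pi.single_nonneg.2 zero_le_one : (0 : ι → ℝ) ≤ Pi.single i 1) j
      · exact mem_halfOpenRay_of_pos hpos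

lemma mem_of_isMinOn (hw : IsGenericWeight a w) (hl : l ∈ conicRepr a y)
    (hmin : IsMinOn (· ⬝ᵥ w) (conicRepr a y) l) (hB : ∀ i ∈ B.1, l i ≠ 0) {i : ι} (hi : l i ≠ 0) :
    i ∈ B.1 := by
  classical
  by_contra hiB
  refine hw B i hiB (le_antisymm (isLower_of_isMinOn hl hmin hB i) ?_)
  rw [← sub_nonneg, ← single_one_dotProduct i w, ← sub_dotProduct]
  refine dotProduct_nonneg_of_isMinOn hl hmin ?_ fun j => ?_
  · simp [sub_smul, B.sum_coords_smul, Pi.single_apply, ite_smul]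
  · by_cases hj : l j = 0
    · have hjB : j ∉ B.1 := fun h => hB j h hj
      have hji : j ≠ i := fun h => hi (h ▸ hj)
      simp [hj, zero_mem_halfOpenRay_iff, B.coords_of_notMem _ hjB, hji]
    · exact mem_halfOpenRay_of_pos ((hl.1 j).lt_of_ne' hj)

lemma IsGeneric.span_support_eq_top (hy : IsGeneric a y) (hl : l ∈ conicRepr a y) :
    span ℝ (a '' support l) = ⊤ := by
  by_contra h_ne
  refine hy _ h_ne (hl.2 ▸ sum_mem fun i _ => ?_)
  by_cases hi : l i = 0
  · simp [hi]
  · exact smul_mem _ _ (subset_span (mem_image_of_mem a hi))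

/-- A set of bases triangulates the cone spanned by `a` if every generic point of the cone lies in
exactly one of their simplicial cones; nothing is asked of the lower-dimensional faces. -/
def IsTriangulation (a : ι → E) (T : Finset (BasisSubset a)) : Prop :=
  ∀ y, IsGeneric a y → y ∈ PointedCone.hull ℝ (range a) → ∃! B, B ∈ T ∧ y ∈ simplicialCone B

end Algebraic

lemma exists_pos_isGenericWeight [Fintype ι] [AddCommGroup E] [Module ℝ E] (a : ι → E) :
    ∃ w : ι → ℝ, (∀ i, 0 < w i) ∧ IsGenericWeight a w := by
  classical
  let H (k : Σ B : BasisSubset a, {i // i ∉ B.1}) : Submodule ℝ (ι → ℝ) :=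
    LinearMap.ker (dotProductBilin ℝ ℝ (k.1.coords (a k.2) - Pi.single k.2.1 1))
  have hH : ∀ k, H k ≠ ⊤ := by
    intro k h_top
    have h_mem : Pi.single k.2.1 1 ∈ H k := h_top ▸ mem_top
    simp [H, k.1.coords_of_notMem _ k.2.2] at h_mem
  have h_open : IsOpen (pi univ fun _ : ι => Ioi (0 : ℝ)) :=
    isOpen_set_pi finite_univ fun _ _ => isOpen_Ioi
  obtain ⟨w, hw_pos, hw⟩ :=
    exists_mem_forall_notMem_submodule hH h_open ⟨1, fun _ _ => one_pos (α := ℝ)⟩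
  refine ⟨w, fun i => hw_pos i trivial, fun B i hi h_eq => hw ⟨B, i, hi⟩ ?_⟩
  simp [H, h_eq]

variable [AddCommGroup E] [Module ℝ E] [TopologicalSpace E] [IsTopologicalAddGroup E]
  [ContinuousSMul ℝ E] [T2Space E]

section Minimizer

variable [Fintype ι] {a : ι → E} {y : E} {w : ι → ℝ}

lemma isClosed_conicRepr (a : ι → E) (y : E) : IsClosed (conicRepr a y) :=
  isClosed_Ici.inter (isClosed_eq (by fun_prop) continuous_const)

lemma exists_isMinOn_conicRepr (hw : ∀ i, 0 < w i) (hy : y ∈ PointedCone.hull ℝ (range a)) :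
    ∃ l ∈ conicRepr a y, IsMinOn (· ⬝ᵥ w) (conicRepr a y) l := by
  obtain ⟨l₀, hl₀⟩ := mem_hull_range_iff.1 hy
  refine ContinuousOn.exists_isMinOn' (by fun_prop) (isClosed_conicRepr a y) hl₀ ?_
  rw [eventually_inf_principal]
  filter_upwards [(isCompact_Icc (a := 0) (b := fun i => l₀ ⬝ᵥ w / w i)).compl_mem_cocompact]
    with l hl_notMem hl
  by_contra! h_lt
  refine hl_notMem ⟨hl.1, fun i => (le_div_iff₀ (hw i)).2 (le_trans ?_ h_lt.le)⟩
  exact Finset.single_le_sum (f := fun i => l i * w i)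
    (fun j _ => mul_nonneg (hl.1 j) (hw j).le) (Finset.mem_univ i)

lemma exists_isLower_mem_simplicialCone (hw_pos : ∀ i, 0 < w i) (hw : IsGenericWeight a w)
    (hy : IsGeneric a y) (hy_mem : y ∈ PointedCone.hull ℝ (range a)) :
    ∃ B : BasisSubset a, IsLower w B ∧ y ∈ simplicialCone B := by
  obtain ⟨l, hl, hmin⟩ := exists_isMinOn_conicRepr hw_pos hy_mem
  obtain ⟨B, hB⟩ := exists_basisSubset_subset (hy.span_support_eq_top hl)
  refine ⟨B, isLower_of_isMinOn hl hmin hB, ?_⟩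
  have h_coords : B.coords y = l := by
    rw [← hl.2]
    exact B.coords_sum_smul_of_support fun i hi =>
      by_contra fun h => hi (mem_of_isMinOn hw hl hmin hB h)
  exact hl.1.trans_eq h_coords.symm

end Minimizer

theorem exists_isTriangulation [Finite ι] (a : ι → E) : ∃ T, IsTriangulation a T := by
  cases nonempty_fintype ι
  obtain ⟨w, hw_pos, hw⟩ := exists_pos_isGenericWeight a
  refine ⟨(toFinite {B : BasisSubset a | IsLower w B}).toFinset, fun y hy hy_mem => ?_⟩
  simp only [Finite.mem_toFinset, mem_ofPred_eq]
  obtain ⟨B, hB, hyB⟩ := exists_isLower_mem_simplicialCone hw_pos hw hy hy_mem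
  exact ⟨B, ⟨hB, hyB⟩, fun B' hB' => hB'.1.eq_of_mem_simplicialCone hw hy hB hB'.2 hyB⟩

end Triangulation

section HalfOpenCone

variable {E ι : Type*}

section Algebraic

variable [AddCommGroup E] [Module ℝ E] {a : ι → E} {q : E}

/-- The simplicial cone of `B` with some facets removed: the points that the direction `q` moves
into the cone, as `eventually_add_smul_mem_simplicialCone_iff` makes precise. -/
def halfOpenCone (q : E) (B : BasisSubset a) : Set E :=
  {x | ∀ i, B.coords x i ∈ halfOpenRay (B.coords q i)}

lemma halfOpenCone_subset_simplicialCone (q : E) (B : BasisSubset a) :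
    halfOpenCone q B ⊆ simplicialCone B :=
  fun _ hx i => halfOpenRay_subset_Ici (hx i)

lemma eventually_add_smul_mem_simplicialCone_iff [Finite ι] (q : E) (B : BasisSubset a) (x : E) :
    ∀ᶠ ε : ℝ in 𝓝[>] 0, x + ε • q ∈ simplicialCone B ↔ x ∈ halfOpenCone q B := by
  have h_coords := eventually_all.2 fun i =>
    eventually_nonneg_add_mul_iff (B.coords x i) (B.coords q i)
  filter_upwards [h_coords] with ε hε
  simp only [simplicialCone, halfOpenCone, mem_ofPred_eq, Pi.le_def, map_add, map_smul]
  exact forall_congr' hε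

variable [Finite ι] {T : Finset (BasisSubset a)}

lemma IsTriangulation.pairwiseDisjoint_halfOpenCone (hT : IsTriangulation a T)
    (hq : IsGeneric a q) : (T : Set (BasisSubset a)).PairwiseDisjoint (halfOpenCone q) := by
  refine fun B hB B' hB' hne => disjoint_left.2 fun x hx hx' => hne ?_
  obtain ⟨ε, h_generic, hε, hε'⟩ := ((hq.eventually_add_smul x).and
    ((eventually_add_smul_mem_simplicialCone_iff q B x).and
      (eventually_add_smul_mem_simplicialCone_iff q B' x))).exists
  exact (hT _ h_generic (simplicialCone_subset_hull B (hε.2 hx))).unique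
    ⟨hB, hε.2 hx⟩ ⟨hB', hε'.2 hx'⟩

lemma IsTriangulation.mem_biUnion_halfOpenCone_iff (hT : IsTriangulation a T)
    (hq : IsGeneric a q) {x : E} :
    x ∈ ⋃ B ∈ T, halfOpenCone q B ↔
      ∃ᶠ ε : ℝ in 𝓝[>] 0, x + ε • q ∈ PointedCone.hull ℝ (range a) := by
  have h_all := eventually_all.2 fun B : BasisSubset a =>
    eventually_add_smul_mem_simplicialCone_iff q B x
  rw [mem_iUnion₂]
  constructor
  · rintro ⟨B, -, hx⟩
    exact (h_all.mono fun ε hε => simplicialCone_subset_hull B ((hε B).2 hx)).frequently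
  · intro h_freq
    obtain ⟨ε, h_mem, hε, h_generic⟩ :=
      (h_freq.and_eventually (h_all.and (hq.eventually_add_smul x))).exists
    obtain ⟨B, ⟨hB, hxB⟩, -⟩ := hT _ h_generic h_mem
    exact ⟨B, hB, (hε B).1 hxB⟩

end Algebraic

section Topological

variable [AddCommGroup E] [Module ℝ E] [TopologicalSpace E] [IsTopologicalAddGroup E]
  [ContinuousSMul ℝ E] [Finite ι] {a : ι → E} {T : Finset (BasisSubset a)} {q : E}

lemma IsTriangulation.biUnion_halfOpenCone (hT : IsTriangulation a T) (hq : IsGeneric a q)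
    (hq_mem : q ∈ interior (PointedCone.hull ℝ (range a) : Set E)) :
    ⋃ B ∈ T, halfOpenCone q B = PointedCone.hull ℝ (range a) := by
  refine Subset.antisymm (iUnion₂_subset fun B _ => ?_) fun x hx => ?_
  · exact (halfOpenCone_subset_simplicialCone q B).trans (simplicialCone_subset_hull B)
  · rw [hT.mem_biUnion_halfOpenCone_iff hq]
    refine Eventually.frequently ?_
    filter_upwards [self_mem_nhdsWithin] with ε hε
    exact interior_subset (add_smul_mem_interior hx hq_mem hε)

lemma IsTriangulation.biUnion_halfOpenCone_neg (hT : IsTriangulation a T) (hq : IsGeneric a q)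
    (hq_mem : q ∈ interior (PointedCone.hull ℝ (range a) : Set E)) :
    ⋃ B ∈ T, halfOpenCone (-q) B = interior (PointedCone.hull ℝ (range a) : Set E) := by
  ext x
  rw [hT.mem_biUnion_halfOpenCone_iff hq.neg]
  constructor
  · intro h_freq
    obtain ⟨ε, h_mem, hε⟩ := (h_freq.and_eventually self_mem_nhdsWithin).exists
    simpa using add_smul_mem_interior h_mem hq_mem hε
  · intro hx
    exact ((tendsto_add_smul_nhdsGT_zero x (-q)).eventually
      (mem_interior_iff_mem_nhds.1 hx)).frequently

end Topological

section TruncatedCone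

variable [AddCommGroup E] [Module ℝ E] {a : ι → E} {q x : E} {B : BasisSubset a} {J : Finset ι}
  {b : ι}

/-- The points of `halfOpenCone q B` that leave it when `a i` is subtracted, for each `i ∈ J`. For
`J = B` this is the half-open parallelepiped spanned by the basis `B`. -/
def truncatedCone (q : E) (B : BasisSubset a) (J : Finset ι) : Set E :=
  {x ∈ halfOpenCone q B | ∀ i ∈ J, B.coords x i - 1 ∉ halfOpenRay (B.coords q i)}

lemma truncatedCone_empty (q : E) (B : BasisSubset a) : truncatedCone q B ∅ = halfOpenCone q B := by
  simp [truncatedCone]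

lemma add_mem_truncatedCone (hb : b ∈ B.1) (hbJ : b ∉ J) (hx : x ∈ truncatedCone q B J) :
    a b + x ∈ truncatedCone q B J := by
  classical
  refine ⟨fun i => ?_, fun i hi => ?_⟩ <;> rw [map_add, B.coords_self hb, Pi.add_apply]
  · obtain rfl | hib := eq_or_ne i b
    · refine mem_halfOpenRay_of_sub_one_mem ?_
      simpa using hx.1 i
    · simpa [hib] using hx.1 i
  · simpa [ne_of_mem_of_not_mem hi hbJ] using hx.2 i hi

lemma sub_mem_truncatedCone_iff (hb : b ∈ B.1) (hbJ : b ∉ J) (hx : x ∈ truncatedCone q B J) :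
    x - a b ∈ truncatedCone q B J ↔ B.coords x b - 1 ∈ halfOpenRay (B.coords q b) := by
  classical
  have h_coords : B.coords (x - a b) = B.coords x - Pi.single b 1 := by
    rw [map_sub, B.coords_self hb]
  refine ⟨fun h => by simpa [h_coords] using h.1 b, fun h => ⟨fun i => ?_, fun i hi => ?_⟩⟩ <;>
    rw [h_coords, Pi.sub_apply]
  · obtain rfl | hib := eq_or_ne i b
    · simpa using h
    · simpa [hib] using hx.1 i
  · simpa [ne_of_mem_of_not_mem hi hbJ] using hx.2 i hi

lemma vadd_truncatedCone_subset (hb : b ∈ B.1) (hbJ : b ∉ J) :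
    a b +ᵥ truncatedCone q B J ⊆ truncatedCone q B J := by
  rintro _ ⟨x, hx, rfl⟩
  exact add_mem_truncatedCone hb hbJ hx

lemma truncatedCone_insert [DecidableEq ι] (hb : b ∈ B.1) (hbJ : b ∉ J) :
    truncatedCone q B (insert b J) =
      truncatedCone q B J \ (a b +ᵥ truncatedCone q B J) := by
  ext x
  rw [Set.mem_sdiff, mem_vadd_set_iff_neg_vadd_mem, vadd_eq_add, neg_add_eq_sub,
    and_congr_right fun hx => not_congr (sub_mem_truncatedCone_iff hb hbJ hx)]
  simp only [truncatedCone, mem_ofPred_eq, Finset.forall_mem_insert]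
  tauto

lemma mem_truncatedCone_self_iff : x ∈ truncatedCone q B B.1 ↔
    ∀ i ∈ B.1, B.coords x i ∈ halfOpenRay (B.coords q i) ∧
      B.coords x i - 1 ∉ halfOpenRay (B.coords q i) := by
  refine ⟨fun hx i hi => ⟨hx.1 i, hx.2 i hi⟩, fun hx => ⟨fun i => ?_, fun i hi => (hx i hi).2⟩⟩
  by_cases hi : i ∈ B.1
  · exact (hx i hi).1
  · rw [B.coords_of_notMem x hi, B.coords_of_notMem q hi, zero_mem_halfOpenRay_iff]

lemma sum_sub_mem_truncatedCone_iff [Finite ι] (hq : IsGeneric a q) :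
    (∑ i ∈ B.1, a i) - x ∈ truncatedCone q B B.1 ↔ x ∈ truncatedCone (-q) B B.1 := by
  classical
  simp only [mem_truncatedCone_self_iff]
  refine forall₂_congr fun i hi => ?_
  have h_coords : B.coords (∑ j ∈ B.1, a j) i = 1 := by
    rw [map_sum, Finset.sum_congr rfl fun j hj => B.coords_self hj, Finset.sum_apply]
    simp [Pi.single_apply, hi]
  have hqi := hq.coords_ne_zero B hi
  have h_left := neg_mem_halfOpenRay_iff (x := B.coords x i - 1) hqi
  have h_right := neg_mem_halfOpenRay_iff (x := B.coords x i) hqi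
  rw [neg_sub] at h_left
  rw [map_sub, map_neg, Pi.sub_apply, Pi.neg_apply, h_coords, h_left, sub_sub_cancel_left, h_right,
    not_not, and_comm]

end TruncatedCone

end HalfOpenCone

section HeightSeries

variable {M : Type*} [AddCommGroup M] {ht : M →+ ℤ} {S T : Set M}

/-- The generating function counting the elements of `S` by height. It ignores negative heights and
records `0` at heights attained infinitely often, hence the condition `IsHeightFinite`. -/
noncomputable def heightSeries (ht : M →+ ℤ) (S : Set M) : ℤ⟦X⟧ :=
  .mk fun k => ((S ∩ ht ⁻¹' {(k : ℤ)}).ncard : ℤ)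

/-- The sets that `heightSeries` counts faithfully. -/
structure IsHeightFinite (ht : M →+ ℤ) (S : Set M) : Prop where
  nonneg : ∀ z ∈ S, 0 ≤ ht z
  finite_level : ∀ k, (S ∩ ht ⁻¹' {k}).Finite

lemma IsHeightFinite.mono (hS : IsHeightFinite ht S) (hTS : T ⊆ S) : IsHeightFinite ht T where
  nonneg z hz := hS.nonneg z (hTS hz)
  finite_level k := (hS.finite_level k).subset (inter_subset_inter_left _ hTS)

lemma coeff_heightSeries (k : ℕ) :
    PowerSeries.coeff k (heightSeries ht S) = ((S ∩ ht ⁻¹' {(k : ℤ)}).ncard : ℤ) :=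
  PowerSeries.coeff_mk k _

lemma heightSeries_sdiff (hS : IsHeightFinite ht S) (hTS : T ⊆ S) :
    heightSeries ht (S \ T) = heightSeries ht S - heightSeries ht T := by
  ext k
  rw [map_sub, coeff_heightSeries, coeff_heightSeries, coeff_heightSeries,
    inter_sdiff_distrib_right]
  exact cast_ncard_sdiff (inter_subset_inter_left _ hTS) (hS.finite_level k)

lemma heightSeries_biUnion {κ : Type*} (K : Finset κ) {S : κ → Set M}
    (hS : ∀ i ∈ K, IsHeightFinite ht (S i)) (h_disj : (K : Set κ).PairwiseDisjoint S) :
    heightSeries ht (⋃ i ∈ K, S i) = ∑ i ∈ K, heightSeries ht (S i) := by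
  ext k
  simp only [map_sum, coeff_heightSeries, iUnion₂_inter]
  have h_ncard := K.finite_toSet.ncard_biUnion (s := fun i => S i ∩ ht ⁻¹' {(k : ℤ)})
    (fun i hi => (hS i hi).finite_level k) (h_disj.mono fun i => inter_subset_left)
  rw [finsum_mem_coe_finset] at h_ncard
  exact_mod_cast h_ncard

lemma heightSeries_vadd (hS : IsHeightFinite ht S) {u : M} {r : ℕ} (hu : ht u = r) :
    heightSeries ht (u +ᵥ S) = PowerSeries.X ^ r * heightSeries ht S := by
  ext k
  rw [PowerSeries.coeff_X_pow_mul', coeff_heightSeries]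
  have h_level : (u +ᵥ S) ∩ ht ⁻¹' {(k : ℤ)} = u +ᵥ (S ∩ ht ⁻¹' {(k - r : ℤ)}) := by
    ext z
    simp only [mem_inter_iff, mem_vadd_set_iff_neg_vadd_mem, vadd_eq_add, mem_preimage,
      mem_singleton_iff, map_add, map_neg, hu]
    refine and_congr_right fun _ => ?_
    lia
  rw [h_level, ncard_vadd_set]
  split_ifs with hrk
  · rw [coeff_heightSeries, Nat.cast_sub hrk]
  · have h_empty : S ∩ ht ⁻¹' {(k - r : ℤ)} = ∅ := by
      refine eq_empty_of_forall_notMem fun z ⟨hzS, hz⟩ => ?_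
      have := hS.nonneg z hzS
      rw [mem_preimage, mem_singleton_iff] at hz
      lia
    rw [h_empty, ncard_empty, Nat.cast_zero]

lemma coeff_heightSeries_sub_preimage {s : M} {i j : ℕ} (h : (i + j : ℤ) = ht s) :
    PowerSeries.coeff i (heightSeries ht ((s - ·) ⁻¹' S)) =
      PowerSeries.coeff j (heightSeries ht S) := by
  have h_level : (s - ·) ⁻¹' S ∩ ht ⁻¹' {(i : ℤ)} = (s - ·) ⁻¹' (S ∩ ht ⁻¹' {(j : ℤ)}) := by
    ext z
    simp only [mem_inter_iff, mem_preimage, mem_singleton_iff, map_sub]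
    refine and_congr_right fun _ => ?_
    lia
  rw [coeff_heightSeries, coeff_heightSeries, h_level,
    ncard_preimage_of_injective_subset_range sub_right_injective]
  exact fun z _ => ⟨s - z, sub_sub_cancel s z⟩

end HeightSeries

section Reciprocity

variable {E ι M : Type*} [AddCommGroup M] {ht : M →+ ℤ} {v : ι → M}

lemma preimage_map_vadd [AddCommGroup E] (φ : M →+ E) (u : M) (S : Set E) :
    φ ⁻¹' (φ u +ᵥ S) = u +ᵥ φ ⁻¹' S := by
  ext z
  simp [mem_vadd_set_iff_neg_vadd_mem]

section HalfOpen

variable [AddCommGroup E] [Module ℝ E] {φ : M →+ E} {q : E}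

lemma heightSeries_truncatedCone (hv : ∀ i, ht (v i) = 1) {B : BasisSubset (φ ∘ v)}
    (h_fin : IsHeightFinite ht (φ ⁻¹' halfOpenCone q B)) {J : Finset ι} (hJ : J ⊆ B.1) :
    heightSeries ht (φ ⁻¹' truncatedCone q B J) =
      (1 - PowerSeries.X) ^ J.card * heightSeries ht (φ ⁻¹' halfOpenCone q B) := by
  classical
  induction J using Finset.induction_on with
  | empty => rw [truncatedCone_empty, Finset.card_empty, pow_zero, one_mul]
  | insert b J hbJ ih =>
    obtain ⟨hb, hJ⟩ := Finset.insert_subset_iff.1 hJ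
    have h_fin_J : IsHeightFinite ht (φ ⁻¹' truncatedCone q B J) :=
      h_fin.mono fun _ hz => hz.1
    have h_shift : v b +ᵥ φ ⁻¹' truncatedCone q B J ⊆ φ ⁻¹' truncatedCone q B J := by
      rw [← preimage_map_vadd]
      exact preimage_mono (vadd_truncatedCone_subset hb hbJ)
    have h_vadd : heightSeries ht (v b +ᵥ φ ⁻¹' truncatedCone q B J) =
        PowerSeries.X * heightSeries ht (φ ⁻¹' truncatedCone q B J) := by
      rw [heightSeries_vadd h_fin_J (r := 1) (by simp [hv]), pow_one]
    rw [truncatedCone_insert hb hbJ, preimage_sdiff, comp_apply, preimage_map_vadd,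
      heightSeries_sdiff h_fin_J h_shift, h_vadd, ih hJ, Finset.card_insert_of_notMem hbJ]
    ring

variable [Finite ι]

lemma coeff_heightSeries_truncatedCone_neg (hv : ∀ i, ht (v i) = 1) (hq : IsGeneric (φ ∘ v) q)
    (B : BasisSubset (φ ∘ v)) {i j : ℕ} (hij : i + j = B.1.card) :
    PowerSeries.coeff i (heightSeries ht (φ ⁻¹' truncatedCone (-q) B B.1)) =
      PowerSeries.coeff j (heightSeries ht (φ ⁻¹' truncatedCone q B B.1)) := by
  have h_height : (i + j : ℤ) = ht (∑ b ∈ B.1, v b) := by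
    rw [map_sum, Finset.sum_congr rfl fun b _ => hv b, Finset.sum_const, nsmul_one, ← hij,
      Nat.cast_add]
  have h_reflect : (∑ b ∈ B.1, v b - ·) ⁻¹' (φ ⁻¹' truncatedCone q B B.1) =
      φ ⁻¹' truncatedCone (-q) B B.1 := by
    ext z
    simp only [mem_preimage, map_sub, map_sum]
    exact sum_sub_mem_truncatedCone_iff hq
  rw [← h_reflect, coeff_heightSeries_sub_preimage h_height]

lemma IsTriangulation.one_sub_X_pow_mul_heightSeries {T : Finset (BasisSubset (φ ∘ v))}
    (hT : IsTriangulation (φ ∘ v) T) (hv : ∀ i, ht (v i) = 1) (hq : IsGeneric (φ ∘ v) q)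
    (h_fin : IsHeightFinite ht (φ ⁻¹' PointedCone.hull ℝ (range (φ ∘ v)))) :
    (1 - PowerSeries.X) ^ Module.finrank ℝ E *
        heightSeries ht (φ ⁻¹' ⋃ B ∈ T, halfOpenCone q B) =
      ∑ B ∈ T, heightSeries ht (φ ⁻¹' truncatedCone q B B.1) := by
  have h_fin_B (B : BasisSubset (φ ∘ v)) : IsHeightFinite ht (φ ⁻¹' halfOpenCone q B) :=
    h_fin.mono (preimage_mono
      ((halfOpenCone_subset_simplicialCone q B).trans (simplicialCone_subset_hull B)))
  rw [preimage_iUnion₂, heightSeries_biUnion T (fun B _ => h_fin_B B)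
    fun B hB B' hB' hne => (hT.pairwiseDisjoint_halfOpenCone hq hB hB' hne).preimage φ,
    Finset.mul_sum]
  refine Finset.sum_congr rfl fun B _ => ?_
  rw [heightSeries_truncatedCone hv (h_fin_B B) Subset.rfl, B.card_eq_finrank]

end HalfOpen

variable [NormedAddCommGroup E] [NormedSpace ℝ E] {φ : M →+ E}

lemma isHeightFinite_preimage_hull [Finite ι] {ℓ : E →ₗ[ℝ] ℝ} (hℓ : ∀ z, ℓ (φ z) = ht z)
    (hv : ∀ i, ht (v i) = 1) (hφ : Tendsto φ cofinite (cocompact E)) :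
    IsHeightFinite ht (φ ⁻¹' PointedCone.hull ℝ (range (φ ∘ v))) := by
  cases nonempty_fintype ι
  have h_repr : ∀ z ∈ φ ⁻¹' PointedCone.hull ℝ (range (φ ∘ v)),
      ∃ l : ι → ℝ, 0 ≤ l ∧ ∑ i, l i • φ (v i) = φ z ∧ ∑ i, l i = ht z := by
    intro z hz
    obtain ⟨l, hl, hlz⟩ := mem_hull_range_iff.1 hz
    refine ⟨l, hl, hlz, ?_⟩
    simp [← hℓ z, ← hlz, hℓ, hv]
  refine ⟨fun z hz => ?_, fun k => ?_⟩
  · obtain ⟨l, hl, -, hl_sum⟩ := h_repr z hz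
    exact_mod_cast hl_sum ▸ Finset.sum_nonneg fun i _ => hl i
  · let K := (fun l : ι → ℝ => ∑ i, l i • φ (v i)) '' Icc 0 fun _ => (k : ℝ)
    have hK : IsCompact K := isCompact_Icc.image (by fun_prop)
    have hK_fin : (φ ⁻¹' K).Finite := by
      simpa using hφ hK.compl_mem_cocompact
    refine hK_fin.subset ?_
    rintro z ⟨hz, rfl⟩
    obtain ⟨l, hl, hlz, hl_sum⟩ := h_repr z hz
    refine ⟨l, ⟨hl, fun i => ?_⟩, hlz⟩
    exact hl_sum ▸ Finset.single_le_sum (fun j _ => hl j) (Finset.mem_univ i)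

/-- Stanley reciprocity, for the lattice points of a full-dimensional cone generated at height
one. -/
theorem coeff_one_sub_X_pow_mul_heightSeries_hull [FiniteDimensional ℝ E] [Finite ι]
    (hv : ∀ i, ht (v i) = 1)
    (h_fin : IsHeightFinite ht (φ ⁻¹' PointedCone.hull ℝ (range (φ ∘ v))))
    (h_int : (interior (PointedCone.hull ℝ (range (φ ∘ v)) : Set E)).Nonempty)
    {i j : ℕ} (hij : i + j = Module.finrank ℝ E) :
    PowerSeries.coeff i ((1 - PowerSeries.X) ^ Module.finrank ℝ E *
        heightSeries ht (φ ⁻¹' interior (PointedCone.hull ℝ (range (φ ∘ v)) : Set E))) =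
      PowerSeries.coeff j ((1 - PowerSeries.X) ^ Module.finrank ℝ E *
        heightSeries ht (φ ⁻¹' PointedCone.hull ℝ (range (φ ∘ v)))) := by
  obtain ⟨T, hT⟩ := exists_isTriangulation (φ ∘ v)
  obtain ⟨q, hq_mem, hq⟩ := exists_mem_isGeneric (φ ∘ v) isOpen_interior h_int
  rw [← hT.biUnion_halfOpenCone_neg hq hq_mem, ← hT.biUnion_halfOpenCone hq hq_mem,
    hT.one_sub_X_pow_mul_heightSeries hv hq h_fin,
    hT.one_sub_X_pow_mul_heightSeries hv hq.neg h_fin, map_sum, map_sum]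
  exact Finset.sum_congr rfl fun B _ =>
    coeff_heightSeries_truncatedCone_neg hv hq B (hij.trans B.card_eq_finrank.symm)

end Reciprocity

section Polytope

variable {d : ℕ}

/-- `latticeCastPair` as a homomorphism of additive groups. -/
def latticeCastHom (d : ℕ) : (Fin d → ℤ) × ℤ →+ (Fin d → ℝ) × ℝ where
  toFun := latticeCastPair
  map_zero' := by ext <;> simp [latticeCastPair]
  map_add' z z' := by ext <;> simp [latticeCastPair]

lemma tendsto_latticeCastHom : Tendsto (latticeCastHom d) cofinite (cocompact _) := by
  have h_pi : Tendsto (fun (x : Fin d → ℤ) j => (x j : ℝ)) cofinite (cocompact _) := by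
    rw [← coprodᵢ_cofinite, ← coprodᵢ_cocompact]
    exact Tendsto.pi_map_coprodᵢ fun _ => Int.tendsto_coe_cofinite
  rw [← coprod_cofinite, ← coprod_cocompact]
  exact h_pi.prodMap_coprod Int.tendsto_coe_cofinite

lemma mem_polyCone_iff {P : Set (Fin d → ℝ)} {x : (Fin d → ℝ) × ℝ} :
    x ∈ polyCone P ↔ 0 ≤ x.2 ∧ x.1 ∈ x.2 • P := by
  constructor
  · rintro ⟨r, hr, p, hp, rfl⟩
    exact ⟨hr, smul_mem_smul_set hp⟩
  · rintro ⟨hr, p, hp, hpx⟩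
    exact ⟨x.2, hr, p, hp, Prod.ext hpx.symm rfl⟩

lemma zero_mem_polyCone {P : Set (Fin d → ℝ)} (hP : P.Nonempty) : 0 ∈ polyCone P :=
  mem_polyCone_iff.2 ⟨le_rfl, by simp [zero_smul_set hP]⟩

lemma polyCone_convexHull_subset {V : Set (Fin d → ℝ)} {C : PointedCone ℝ ((Fin d → ℝ) × ℝ)}
    (hC : ∀ v ∈ V, (v, 1) ∈ C) : polyCone (convexHull ℝ V) ⊆ C := by
  rintro _ ⟨r, hr, p, hp, rfl⟩
  have h_slice : Convex ℝ {p : Fin d → ℝ | (p, (1 : ℝ)) ∈ C} := by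
    intro p hp p' hp' s t hs ht hst
    have := C.add_mem (C.smul_mem hs hp) (C.smul_mem ht hp')
    simpa [hst] using this
  have hpC : (p, (1 : ℝ)) ∈ C := convexHull_min hC h_slice hp
  simpa using C.smul_mem hr hpC

lemma polyCone_convexHull {V : Set (Fin d → ℝ)} (hV : V.Nonempty) :
    polyCone (convexHull ℝ V) = PointedCone.hull ℝ ((fun p => (p, (1 : ℝ))) '' V) := by
  refine Subset.antisymm (polyCone_convexHull_subset fun v hv => ?_) fun x hx => ?_
  · exact subset_span (mem_image_of_mem _ hv)
  · induction hx using span_induction with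
    | mem x hx =>
      obtain ⟨v, hv, rfl⟩ := hx
      exact ⟨1, zero_le_one, v, subset_convexHull ℝ V hv, by simp⟩
    | zero => exact zero_mem_polyCone hV.convexHull
    | add x y _ _ hx hy =>
      rw [mem_polyCone_iff] at hx hy ⊢
      refine ⟨add_nonneg hx.1 hy.1, ?_⟩
      rw [Prod.snd_add, (convex_convexHull ℝ V).add_smul hx.1 hy.1]
      exact add_mem_add hx.2 hy.2
    | smul c x _ hx =>
      obtain ⟨r, hr, p, hp, rfl⟩ := hx
      exact ⟨c * r, mul_nonneg c.2 hr, p, hp, Prod.ext (smul_smul (c : ℝ) r p) rfl⟩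

lemma heightSeries_preimage_polyCone (P : Set (Fin d → ℝ)) :
    heightSeries (.snd (Fin d → ℤ) ℤ) (latticeCastHom d ⁻¹' polyCone P) =
      .mk fun i => (Nat.card {x : Fin d → ℤ | (fun j => (x j : ℝ)) ∈ (i : ℝ) • P} : ℤ) := by
  ext k
  have h_level : latticeCastHom d ⁻¹' polyCone P ∩ AddMonoidHom.snd (Fin d → ℤ) ℤ ⁻¹' {(k : ℤ)} =
      (·, (k : ℤ)) '' {x : Fin d → ℤ | (fun j => (x j : ℝ)) ∈ (k : ℝ) • P} := by
    ext ⟨x, m⟩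
    have h_mem : latticeCastHom d (x, k) ∈ polyCone P ↔ (fun j => (x j : ℝ)) ∈ (k : ℝ) • P := by
      simp [mem_polyCone_iff, latticeCastHom, latticeCastPair]
    constructor
    · rintro ⟨hx, rfl⟩
      exact ⟨x, h_mem.1 hx, rfl⟩
    · rintro ⟨x, hx, h_eq⟩
      cases h_eq
      exact ⟨h_mem.2 hx, rfl⟩
  rw [coeff_heightSeries, PowerSeries.coeff_mk, h_level,
    ncard_image_of_injective _ (Prod.mk_left_injective _), Nat.card_coe_set_eq]

variable {V : Finset (Fin d → ℝ)}

lemma exists_polyCone_eq_hull_range (hV_nonempty : V.Nonempty)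
    (hV : ∀ v ∈ V, ∀ j, ∃ z : ℤ, v j = (z : ℝ)) :
    ∃ v : V → (Fin d → ℤ) × ℤ, (∀ x, AddMonoidHom.snd (Fin d → ℤ) ℤ (v x) = 1) ∧
      polyCone (convexHull ℝ (V : Set (Fin d → ℝ))) =
        PointedCone.hull ℝ (range (latticeCastHom d ∘ v)) := by
  choose! z hz using hV
  refine ⟨fun x => (z x, 1), fun _ => rfl, ?_⟩
  rw [polyCone_convexHull hV_nonempty, image_eq_range]
  congr! 3
  ext1 x
  exact Prod.ext (funext fun j => hz x x.2 j) Int.cast_one.symm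

lemma isHeightFinite_preimage_polyCone (hV_nonempty : V.Nonempty)
    (hV : ∀ v ∈ V, ∀ j, ∃ z : ℤ, v j = (z : ℝ)) :
    IsHeightFinite (.snd (Fin d → ℤ) ℤ)
      (latticeCastHom d ⁻¹' polyCone (convexHull ℝ (V : Set (Fin d → ℝ)))) := by
  obtain ⟨v, hv, h_cone⟩ := exists_polyCone_eq_hull_range hV_nonempty hV
  rw [h_cone]
  exact isHeightFinite_preimage_hull (ℓ := .snd ℝ _ ℝ) (fun _ => rfl) hv tendsto_latticeCastHom

theorem coeff_one_sub_X_pow_mul_heightSeries_polyCone (hV_nonempty : V.Nonempty)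
    (hV : ∀ v ∈ V, ∀ j, ∃ z : ℤ, v j = (z : ℝ))
    (h_int : (interior (polyCone (convexHull ℝ (V : Set (Fin d → ℝ))))).Nonempty)
    {i j : ℕ} (hij : i + j = d + 1) :
    PowerSeries.coeff i ((1 - PowerSeries.X) ^ (d + 1) * heightSeries (.snd (Fin d → ℤ) ℤ)
        (latticeCastHom d ⁻¹' interior (polyCone (convexHull ℝ (V : Set (Fin d → ℝ)))))) =
      PowerSeries.coeff j ((1 - PowerSeries.X) ^ (d + 1) * heightSeries (.snd (Fin d → ℤ) ℤ)
        (latticeCastHom d ⁻¹' polyCone (convexHull ℝ (V : Set (Fin d → ℝ))))) := by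
  have h_fin := isHeightFinite_preimage_polyCone hV_nonempty hV
  obtain ⟨v, hv, h_cone⟩ := exists_polyCone_eq_hull_range hV_nonempty hV
  rw [h_cone] at h_fin h_int ⊢
  have h_rank : Module.finrank ℝ ((Fin d → ℝ) × ℝ) = d + 1 := by simp
  rw [← h_rank] at hij ⊢
  exact coeff_one_sub_X_pow_mul_heightSeries_hull hv h_fin h_int hij

end Polytope

end Ehrhart

open Ehrhart in
/-- Palindromy for Gorenstein lattice polytopes of index `r`; the reflexive ones have `r = 1`. -/
theorem stmt_8_general (d : ℕ) (V : Finset (Fin d → ℝ))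
    (hV : ∀ v ∈ V, ∀ j, ∃ z : ℤ, v j = (z : ℝ))
    (P : Set (Fin d → ℝ)) (hP : P = convexHull ℝ (V : Set (Fin d → ℝ))) (hne : P.Nonempty) (r : ℕ)
    (hGorenstein : ∃ p : (Fin d → ℤ) × ℤ, p.2 = r ∧
      {z : (Fin d → ℤ) × ℤ | latticeCastPair z ∈ interior (polyCone P)} =
        (fun z => p + z) '' {z : (Fin d → ℤ) × ℤ | latticeCastPair z ∈ polyCone P})
    (N : ℕ → ℕ)
    (hN : ∀ i, N i = Nat.card {x : Fin d → ℤ | (fun j => (x j : ℝ)) ∈ (i : ℝ) • P})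
    (hstar : ℕ → ℤ)
    (hEhr : (1 - PowerSeries.X) ^ (d + 1) * PowerSeries.mk (fun i => (N i : ℤ)) =
      PowerSeries.mk hstar) :
    ∀ i j, i + j + r = d + 1 → hstar i = hstar j := by
  intro i j hij
  obtain ⟨p, hp, h_int⟩ := hGorenstein
  subst hP
  have hV_nonempty : V.Nonempty := convexHull_nonempty_iff.1 hne
  have h_cone (k : ℕ) : PowerSeries.coeff k ((1 - PowerSeries.X) ^ (d + 1) *
      heightSeries (.snd (Fin d → ℤ) ℤ) (latticeCastHom d ⁻¹' polyCone (convexHull ℝ V))) =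
        hstar k := by
    simp_rw [heightSeries_preimage_polyCone, ← hN, hEhr, PowerSeries.coeff_mk]
  have h_shift : latticeCastHom d ⁻¹' interior (polyCone (convexHull ℝ V)) =
      p +ᵥ latticeCastHom d ⁻¹' polyCone (convexHull ℝ V) := h_int
  have h_int_nonempty : (interior (polyCone (convexHull ℝ (V : Set (Fin d → ℝ))))).Nonempty := by
    refine Set.nonempty_of_nonempty_preimage (f := latticeCastHom d) ?_
    rw [h_shift]
    exact Set.Nonempty.vadd_set ⟨0, by simpa using zero_mem_polyCone hne⟩
  have h_reciprocity := coeff_one_sub_X_pow_mul_heightSeries_polyCone hV_nonempty hV h_int_nonempty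
    (show i + r + j = d + 1 by omega)
  rwa [h_shift, heightSeries_vadd (isHeightFinite_preimage_polyCone hV_nonempty hV) hp,
    mul_left_comm, PowerSeries.coeff_X_pow_mul, h_cone, h_cone] at h_reciprocity

/-- Hibi: the `h*`-polynomial of a reflexive lattice polytope is
palindromic: `h*_k = h*_(d-k)` for all `0 ≤ k ≤ d`. -/
theorem stmt_8 (d : ℕ) (V : Finset (Fin d → ℝ))
    (hV : ∀ v ∈ V, ∀ j, ∃ z : ℤ, v j = (z : ℝ))
    (P : Set (Fin d → ℝ)) (hP : P = convexHull ℝ (V : Set (Fin d → ℝ)))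
    (hdim : affineSpan ℝ P = ⊤)
    (hreflexive : ∃ p : (Fin d → ℤ) × ℤ, p.2 = 1 ∧
      {z : (Fin d → ℤ) × ℤ | latticeCastPair z ∈ interior (polyCone P)} =
        (fun z => p + z) '' {z : (Fin d → ℤ) × ℤ | latticeCastPair z ∈ polyCone P})
    (N : ℕ → ℕ)
    (hN : ∀ i, N i = Nat.card {x : Fin d → ℤ | (fun j => (x j : ℝ)) ∈ (i : ℝ) • P})
    (hstar : ℕ → ℤ) (hdeg : ∀ i, d < i → hstar i = 0)
    (hEhr : (1 - PowerSeries.X) ^ (d + 1) * PowerSeries.mk (fun i => (N i : ℤ)) =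
      PowerSeries.mk hstar) :
    ∀ i ≤ d, hstar i = hstar (d - i) := by
  have hne : P.Nonempty := AffineSubspace.nonempty_of_affineSpan_eq_top ℝ _ _ hdim
  exact fun i hi => stmt_8_general d V hV P hP hne 1 hreflexive N hN hstar hEhr i (d - i) (by omega)
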